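/- There exists an integer M such that for all integers m ≥ M and all integers n with 2 ≤ n ≤ m-2, one has δ_0(n,m) > (log n)/(2·log m). -/

import Mathlib

/-- `Llcm n m` is the least common multiple of the integers strictly between `n` and `m`,
i.e. of `{n+1, ..., m-1}`. -/
def Llcm (n m : ℕ) : ℕ := (Finset.Ioo n m).lcm id

/-- `delta r n m` is the density `δ_r(n,m)` of positive integers with exactly `r`
divisors in the open interval `(n, m)`: the proportion of `x ∈ {1, ..., Llcm n m}`
having exactly `r` divisors `d` with `n < d < m`. -/
def delta (r n m : ℕ) : ℚ :=
  (((Finset.Icc 1 (Llcm n m)).filter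
      (fun x => ((Finset.Ioo n m).filter (fun d => d ∣ x)).card = r)).card : ℚ) /
    (Llcm n m : ℚ)

/-!
If `a ≤ n` and `y` is coprime to `m!`, then every divisor `d < m` of `a * y` divides `a`, so `a * y`
has no divisor in `(n, m)`. The products `a * y` determine `a` and `y`, and counting them gives
`δ_0(n,m) ≥ H_n * ∏_{p ≤ m} (1 - 1/p)`, where `H_n > log n`. By Mertens' third theorem the product
is asymptotic to `exp (-γ) / log m`, and `exp γ < 2`.

Mertens' first theorem and partial summation give `∑_{p ≤ x} 1/p = log (log x) + M + o(1)`. Hence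
the series `∑ 1/p` over primes placed at `log p`, minus `∑ 1/n` over integers placed at `n`, has
partial sums converging to `M - γ`. Abel's theorem identifies this limit with that of
`∑ p ^ (-1-ε) + log (1 - exp (-ε))` as `ε → 0`, which the Euler product of `ζ` evaluates.
-/

section Counting

open Finset

lemma card_filter_Icc_mul_of_periodic (p : ℕ → Prop) [DecidablePred p] {T : ℕ}
    (hp : Function.Periodic p T) (K : ℕ) :
    #{x ∈ Icc 1 (K * T) | p x} = K * #{x ∈ Icc 1 T | p x} := by
  have card_eq_count (N : ℕ) (hN : Function.Periodic p N) :
      #{x ∈ Icc 1 N | p x} = Nat.count p N := by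
    rw [← Nat.filter_Ico_card_eq_of_periodic 1 N p hN, add_comm 1 N]
    rfl
  have periodic_mul (K : ℕ) : Function.Periodic p (K * T) := by simpa using hp.nat_mul K
  rw [card_eq_count _ (periodic_mul K), card_eq_count _ hp]
  induction K with
  | zero => simp
  | succ K ih =>
    have shift (x : ℕ) : p (K * T + x) = p x := by rw [Nat.add_comm, periodic_mul K]
    simp only [add_one_mul, Nat.count_add, ih, shift]

lemma periodic_card_divisors_Ioo (r n m : ℕ) :
    Function.Periodic (fun x ↦ #{d ∈ Ioo n m | d ∣ x} = r) (Llcm n m) := fun x ↦ by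
  have same_divisors : {d ∈ Ioo n m | d ∣ x + Llcm n m} = {d ∈ Ioo n m | d ∣ x} :=
    filter_congr fun d hd ↦ (Nat.dvd_add_left (dvd_lcm hd : id d ∣ Llcm n m))
  simp only [same_divisors]

lemma Llcm_pos (n m : ℕ) : 0 < Llcm n m :=
  Nat.pos_of_ne_zero (by simp [Llcm, Finset.lcm_eq_zero_iff])

lemma delta_mul_of_Llcm_dvd (r n m : ℕ) {N : ℕ} (hN : Llcm n m ∣ N) :
    delta r n m * N = #{x ∈ Icc 1 N | #{d ∈ Ioo n m | d ∣ x} = r} := by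
  obtain ⟨K, rfl⟩ := hN
  have Llcm_ne_zero : (Llcm n m : ℚ) ≠ 0 := by exact_mod_cast (Llcm_pos n m).ne'
  rw [mul_comm (Llcm n m), card_filter_Icc_mul_of_periodic _ (periodic_card_divisors_Ioo r n m),
    delta]
  push_cast
  field_simp

lemma card_filter_coprime_Icc_of_dvd {D N : ℕ} (hN : D ∣ N) :
    (#{y ∈ Icc 1 N | D.Coprime y} : ℚ) = N * ∏ p ∈ D.primeFactors, (1 - (p : ℚ)⁻¹) := by
  obtain ⟨K, rfl⟩ := hN
  have card_eq_totient : #{y ∈ Icc 1 D | D.Coprime y} = D.totient := by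
    rw [← Nat.filter_coprime_Ico_eq_totient D 1, add_comm 1 D]
    rfl
  rw [mul_comm D, card_filter_Icc_mul_of_periodic _ (Nat.periodic_coprime D), card_eq_totient]
  push_cast
  rw [Nat.totient_eq_mul_prod_factors, mul_assoc]

lemma primeFactors_factorial (m : ℕ) : m.factorial.primeFactors = m.primesLE := by
  ext p
  rw [Nat.mem_primeFactors_of_ne_zero m.factorial_ne_zero, Nat.mem_primesLE, and_comm]
  exact and_congr_left fun hp ↦ hp.dvd_factorial

lemma coprime_of_factorial_coprime {k a y : ℕ} (hy : k.factorial.Coprime y) (ha₀ : 0 < a)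
    (hak : a ≤ k) : a.Coprime y :=
  hy.coprime_dvd_left (Nat.dvd_factorial ha₀ hak)

lemma filter_dvd_mul_Ioo_eq_empty {n m a y : ℕ} (ha₀ : 0 < a) (han : a ≤ n)
    (hy : m.factorial.Coprime y) : {d ∈ Ioo n m | d ∣ a * y} = ∅ := by
  refine filter_eq_empty_iff.2 fun d hd hdvd ↦ ?_
  rw [mem_Ioo] at hd
  have hda : d ∣ a :=
    (coprime_of_factorial_coprime hy (by omega) (by omega)).dvd_of_dvd_mul_right hdvd
  have := Nat.le_of_dvd ha₀ hda
  omega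

lemma eq_and_eq_of_mul_eq_mul_of_factorial_coprime {k a b y z : ℕ}
    (ha : a ∈ Icc 1 k) (hb : b ∈ Icc 1 k) (hy : k.factorial.Coprime y)
    (hz : k.factorial.Coprime z) (h : a * y = b * z) : a = b ∧ y = z := by
  rw [mem_Icc] at ha hb
  have hab : a ∣ b :=
    (coprime_of_factorial_coprime hz ha.1 ha.2).dvd_of_dvd_mul_right (h ▸ dvd_mul_right a y)
  have hba : b ∣ a :=
    (coprime_of_factorial_coprime hy hb.1 hb.2).dvd_of_dvd_mul_right (h ▸ dvd_mul_right b z)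
  obtain rfl := Nat.dvd_antisymm hab hba
  exact ⟨rfl, Nat.eq_of_mul_eq_mul_left ha.1 h⟩

lemma sum_card_coprime_factorial_le {n m : ℕ} (hnm : n < m) (N : ℕ) :
    ∑ a ∈ Icc 1 n, #{y ∈ Icc 1 (N / a) | m.factorial.Coprime y} ≤
      #{x ∈ Icc 1 N | #{d ∈ Ioo n m | d ∣ x} = 0} := by
  rw [← card_sigma]
  refine card_le_card_of_injOn (fun x ↦ x.1 * x.2) ?_ ?_
  · rintro ⟨a, y⟩ h
    simp only [mem_coe, mem_sigma, mem_Icc, mem_filter] at h ⊢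
    obtain ⟨⟨ha₀, han⟩, ⟨hy₀, hyN⟩, hy⟩ := h
    refine ⟨⟨Nat.mul_pos ha₀ hy₀, ?_⟩, by rw [filter_dvd_mul_Ioo_eq_empty ha₀ han hy, card_empty]⟩
    exact (Nat.mul_le_mul_left a hyN).trans (Nat.mul_div_le N a)
  · rintro ⟨a, y⟩ h ⟨b, z⟩ h' heq
    simp only [mem_coe, mem_sigma, mem_filter] at h h' heq
    have subset_Icc : Icc 1 n ⊆ Icc 1 m := Icc_subset_Icc_right hnm.le
    obtain ⟨rfl, rfl⟩ := eq_and_eq_of_mul_eq_mul_of_factorial_coprime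
      (subset_Icc h.1) (subset_Icc h'.1) h.2.2 h'.2.2 heq
    rfl

lemma harmonic_mul_prod_le_delta_zero {n m : ℕ} (hnm : n < m) :
    harmonic n * ∏ p ∈ m.primesLE, (1 - (p : ℚ)⁻¹) ≤ delta 0 n m := by
  set N := n.factorial * (m.factorial * Llcm n m)
  have hN : (0 : ℚ) < N := by
    exact_mod_cast Nat.mul_pos n.factorial_pos (Nat.mul_pos m.factorial_pos (Llcm_pos n m))
  have card_coprime {a : ℕ} (ha : a ∈ Icc 1 n) :
      (#{y ∈ Icc 1 (N / a) | m.factorial.Coprime y} : ℚ) =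
        (a : ℚ)⁻¹ * (N * ∏ p ∈ m.primesLE, (1 - (p : ℚ)⁻¹)) := by
    obtain ⟨ha₀, han⟩ := mem_Icc.1 ha
    have ha_dvd : a ∣ n.factorial := Nat.dvd_factorial ha₀ han
    have hdvd : m.factorial ∣ N / a := by
      rw [← Nat.div_mul_right_comm ha_dvd]
      exact (dvd_mul_right _ _).mul_left _
    rw [card_filter_coprime_Icc_of_dvd hdvd, primeFactors_factorial,
      Nat.cast_div (ha_dvd.mul_right _) (by positivity), div_eq_inv_mul, mul_assoc]
  have hN_dvd : Llcm n m ∣ N := ((dvd_refl _).mul_left _).mul_left _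
  refine le_of_mul_le_mul_right ?_ hN
  calc (harmonic n * ∏ p ∈ m.primesLE, (1 - (p : ℚ)⁻¹)) * N
      = ∑ a ∈ Icc 1 n, (#{y ∈ Icc 1 (N / a) | m.factorial.Coprime y} : ℚ) := by
        rw [sum_congr rfl fun a ↦ card_coprime, ← sum_mul, harmonic_eq_sum_Icc]
        ring
    _ ≤ #{x ∈ Icc 1 N | #{d ∈ Ioo n m | d ∣ x} = 0} := by
        exact_mod_cast sum_card_coprime_factorial_le hnm N
    _ = delta 0 n m * N := (delta_mul_of_Llcm_dvd 0 n m hN_dvd).symm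

end Counting

section Abel

open Filter MeasureTheory Real Set Topology

variable {ι : Type*} {a ν : ι → ℝ}

/-- The summatory function `t ↦ ∑_{ν i ≤ t} a i` of the general Dirichlet series
`∑ i, a i * exp (-(s * ν i))` with coefficients `a` and frequencies `ν`. -/
noncomputable def dirichletPartialSum (a ν : ι → ℝ) (t : ℝ) : ℝ :=
  ∑' i, if ν i ≤ t then a i else 0

lemma dirichletPartialSum_eq_sum {s : Finset ι} {t : ℝ} (hs : ∀ i, i ∈ s ↔ ν i ≤ t) :
    dirichletPartialSum a ν t = ∑ i ∈ s, a i :=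
  (tsum_eq_sum fun i hi ↦ if_neg (mt (hs i).2 hi)).trans
    (Finset.sum_congr rfl fun i hi ↦ if_pos ((hs i).1 hi))

lemma dirichletPartialSum_mul_left {ε : ℝ} (hε : 0 < ε) (t : ℝ) :
    dirichletPartialSum a (fun i ↦ ε * ν i) t = dirichletPartialSum a ν (t / ε) := by
  simp only [dirichletPartialSum, le_div_iff₀' hε]

lemma norm_ite_le_exp_mul (t : ℝ) (i : ι) :
    ‖if ν i ≤ t then a i else 0‖ ≤ exp t * ‖a i * exp (-ν i)‖ := by
  split_ifs with h
  · rw [norm_mul, norm_of_nonneg (exp_pos _).le, mul_left_comm, ← exp_add]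
    exact le_mul_of_one_le_right (norm_nonneg _) (one_le_exp (by linarith))
  · rw [norm_zero]
    positivity

lemma summable_ite_of_summable_mul_exp (h : Summable fun i ↦ a i * exp (-ν i)) (t : ℝ) :
    Summable fun i ↦ if ν i ≤ t then a i else 0 :=
  .of_norm_bounded (h.norm.mul_left (exp t)) (norm_ite_le_exp_mul t)

lemma norm_dirichletPartialSum_le (h : Summable fun i ↦ a i * exp (-ν i)) (t : ℝ) :
    ‖dirichletPartialSum a ν t‖ ≤ exp t * ∑' i, ‖a i * exp (-ν i)‖ :=
  tsum_of_norm_bounded (h.norm.hasSum.mul_left (exp t)) (norm_ite_le_exp_mul t)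

lemma exists_norm_dirichletPartialSum_le {c : ℝ} (h : Summable fun i ↦ a i * exp (-ν i))
    (hc : Tendsto (dirichletPartialSum a ν) atTop (𝓝 c)) :
    ∃ K, ∀ t, ‖dirichletPartialSum a ν t‖ ≤ K := by
  obtain ⟨T, hT⟩ := eventually_atTop.1 (hc.norm.eventually_le_const (lt_add_one ‖c‖))
  refine ⟨max (‖c‖ + 1) (exp T * ∑' i, ‖a i * exp (-ν i)‖), fun t ↦ ?_⟩
  rcases le_total T t with ht | ht
  · exact (hT t ht).trans (le_max_left _ _)
  · refine (norm_dirichletPartialSum_le h t).trans (le_max_of_le_right ?_)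
    gcongr

lemma measurable_dirichletPartialSum [Countable ι] (h : Summable fun i ↦ a i * exp (-ν i)) :
    Measurable (dirichletPartialSum a ν) :=
  measurable_of_tendsto_metrizable' atTop
    (f := fun (s : Finset ι) t ↦ ∑ i ∈ s, if ν i ≤ t then a i else 0)
    (fun _ ↦ Finset.measurable_fun_sum _ fun _ _ ↦
      Measurable.ite measurableSet_Ici measurable_const measurable_const)
    (tendsto_pi_nhds.2 fun t ↦ (summable_ite_of_summable_mul_exp h t).hasSum)

lemma exp_neg_mul_ite_eq_indicator (x b : ℝ) :
    (fun t ↦ exp (-t) * if x ≤ t then b else 0) = (Ici x).indicator fun t ↦ exp (-t) * b := by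
  ext t
  simp [indicator_apply]

lemma integrableOn_Ici_exp_neg_mul_ite (x b : ℝ) :
    IntegrableOn (fun t ↦ exp (-t) * if x ≤ t then b else 0) (Ici 0) := by
  rw [exp_neg_mul_ite_eq_indicator]
  refine Integrable.indicator (Integrable.mul_const ?_ b) measurableSet_Ici
  exact (integrableOn_Ici_iff_integrableOn_Ioi (by simp)).2 (integrableOn_exp_neg_Ioi 0)

lemma setIntegral_Ici_exp_neg_mul_ite {x : ℝ} (hx : 0 ≤ x) (b : ℝ) :
    ∫ t in Ici 0, exp (-t) * (if x ≤ t then b else 0) = b * exp (-x) := by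
  rw [exp_neg_mul_ite_eq_indicator, setIntegral_indicator measurableSet_Ici, Ici_inter_Ici,
    max_eq_right hx, integral_Ici_eq_integral_Ioi, integral_mul_const, integral_exp_neg_Ioi,
    mul_comm]

lemma integral_exp_neg_mul_dirichletPartialSum [Countable ι] (hν : ∀ i, 0 ≤ ν i)
    (h : Summable fun i ↦ a i * exp (-ν i)) :
    ∫ t in Ioi 0, exp (-t) * dirichletPartialSum a ν t = ∑' i, a i * exp (-ν i) := by
  simp only [dirichletPartialSum, ← tsum_mul_left]
  rw [← integral_Ici_eq_integral_Ioi, ← integral_tsum_of_summable_integral_norm]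
  · exact tsum_congr fun i ↦ setIntegral_Ici_exp_neg_mul_ite (hν i) (a i)
  · exact fun i ↦ integrableOn_Ici_exp_neg_mul_ite (ν i) (a i)
  · refine h.norm.congr fun i ↦ ?_
    simp only [norm_mul, norm_of_nonneg (exp_pos _).le, apply_ite norm, norm_zero]
    exact (setIntegral_Ici_exp_neg_mul_ite (hν i) ‖a i‖).symm

/-- Abel's theorem for general Dirichlet series: substituting `t / ε` for `t` writes the series as
`∫ t in Ioi 0, exp (-t) * dirichletPartialSum a ν (t / ε)`, where dominated convergence applies. -/
theorem tendsto_tsum_mul_exp_neg_of_tendsto_dirichletPartialSum [Countable ι] {c : ℝ}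
    (hν : ∀ i, 0 ≤ ν i) (h : ∀ ε > 0, Summable fun i ↦ a i * exp (-(ε * ν i)))
    (hc : Tendsto (dirichletPartialSum a ν) atTop (𝓝 c)) :
    Tendsto (fun ε ↦ ∑' i, a i * exp (-(ε * ν i))) (𝓝[>] 0) (𝓝 c) := by
  have h_one : Summable fun i ↦ a i * exp (-ν i) := by simpa using h 1 one_pos
  obtain ⟨K, hK⟩ := exists_norm_dirichletPartialSum_le h_one hc
  have eq_integral : ∀ᶠ ε in 𝓝[>] (0 : ℝ),
      ∫ t in Ioi 0, exp (-t) * dirichletPartialSum a ν (t / ε) =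
        ∑' i, a i * exp (-(ε * ν i)) := by
    filter_upwards [self_mem_nhdsWithin] with ε hε
    rw [← integral_exp_neg_mul_dirichletPartialSum
      (fun i ↦ mul_nonneg (le_of_lt hε) (hν i)) (h ε hε)]
    simp only [dirichletPartialSum_mul_left hε]
  have integral_limit : ∫ t in Ioi 0, exp (-t) * c = c := by
    rw [integral_mul_const, integral_exp_neg_Ioi_zero, one_mul]
  refine Tendsto.congr' eq_integral (integral_limit ▸ ?_)
  refine tendsto_integral_filter_of_dominated_convergence (fun t ↦ exp (-t) * K)
    (.of_forall fun ε ↦ ?_) (.of_forall fun ε ↦ .of_forall fun t ↦ ?_)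
    ((integrableOn_exp_neg_Ioi 0).mul_const K) ?_
  · exact (by fun_prop : Measurable fun t : ℝ ↦ exp (-t)).mul
      ((measurable_dirichletPartialSum h_one).comp (measurable_id.div_const ε))
      |>.aestronglyMeasurable
  · rw [norm_mul, norm_of_nonneg (exp_pos _).le]
    gcongr
    exact hK _
  · filter_upwards [ae_restrict_mem measurableSet_Ioi] with t ht
    exact (hc.comp (tendsto_inv_nhdsGT_zero.const_mul_atTop ht)).const_mul (exp (-t))

end Abel

section MertensFirst

open Finset Real
open ArithmeticFunction (sum_Ioc_mul_zeta_eq_sum vonMangoldt_apply_prime vonMangoldt_mul_zeta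
  vonMangoldt_nonneg)
open scoped ArithmeticFunction.vonMangoldt

lemma log_factorial_eq_sum_vonMangoldt_mul_div (N : ℕ) :
    log N.factorial = ∑ n ∈ Ioc 0 N, Λ n * (N / n : ℕ) := by
  rw [← sum_Ioc_mul_zeta_eq_sum, vonMangoldt_mul_zeta, ← Ico_add_one_add_one_eq_Ioc,
    zero_add, ← prod_Ico_id_eq_factorial, Nat.cast_prod, log_prod]
  · simp only [ArithmeticFunction.log_apply]
  · intro n hn
    have := (mem_Ico.1 hn).1
    positivity

lemma log_factorial_le_mul_sum_vonMangoldt_div (N : ℕ) :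
    log N.factorial ≤ N * ∑ n ∈ Ioc 0 N, Λ n / n := by
  rw [log_factorial_eq_sum_vonMangoldt_mul_div, mul_sum]
  refine sum_le_sum fun n _ ↦ ?_
  calc Λ n * (N / n : ℕ) ≤ Λ n * (N / n) := by
        gcongr
        exact Nat.cast_div_le
    _ = N * (Λ n / n) := by ring

lemma mul_sum_vonMangoldt_div_le_log_factorial_add_psi (N : ℕ) :
    N * ∑ n ∈ Ioc 0 N, Λ n / n ≤ log N.factorial + Chebyshev.psi N := by
  rw [log_factorial_eq_sum_vonMangoldt_mul_div, mul_sum, Chebyshev.psi, Nat.floor_natCast,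
    ← sum_add_distrib]
  refine sum_le_sum fun n _ ↦ ?_
  have div_le : (N / n : ℝ) ≤ (N / n : ℕ) + 1 := by
    rw [← Nat.floor_div_eq_div (K := ℝ)]
    exact (Nat.lt_floor_add_one _).le
  calc N * (Λ n / n) = Λ n * (N / n) := by ring
    _ ≤ Λ n * ((N / n : ℕ) + 1) := by
        gcongr
    _ = Λ n * (N / n : ℕ) + Λ n := by ring

lemma abs_sum_vonMangoldt_div_sub_log_le {N : ℕ} (hN : N ≠ 0) :
    |∑ n ∈ Ioc 0 N, Λ n / n - log N| ≤ log 4 + 4 := by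
  have hN₀ : (0 : ℝ) < N := by positivity
  have log_four_pos : 0 < log 4 := log_pos (by norm_num)
  have upper : N * (∑ n ∈ Ioc 0 N, Λ n / n) ≤ N * (log N + (log 4 + 4)) := by
    have log_factorial_le : log N.factorial ≤ N * log N := by
      rw [← log_pow]
      exact log_le_log (by positivity) (by exact_mod_cast N.factorial_le_pow)
    linarith [mul_sum_vonMangoldt_div_le_log_factorial_add_psi N,
      Chebyshev.psi_le_const_mul_self hN₀.le]
  have lower : N * (log N - 1) ≤ N * ∑ n ∈ Ioc 0 N, Λ n / n := by
    have log_N_nonneg : 0 ≤ log N := log_natCast_nonneg N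
    have log_two_pi_nonneg : 0 ≤ log (2 * π) := log_nonneg (by linarith [pi_gt_three])
    linarith [log_factorial_le_mul_sum_vonMangoldt_div N, Stirling.le_log_factorial_stirling hN]
  rw [abs_le]
  constructor
  · linarith [le_of_mul_le_mul_left lower hN₀]
  · linarith [le_of_mul_le_mul_left upper hN₀]

lemma summable_vonMangoldt_div_of_not_prime :
    Summable fun n : ℕ ↦ if n.Prime then 0 else Λ n / n := by
  have := ArithmeticFunction.vonMangoldt.summable_residueClass_non_primes_div (1 : ZMod 1)
  refine this.congr fun n ↦ ?_
  simp [ArithmeticFunction.vonMangoldt.residueClass, Subsingleton.elim _ (1 : ZMod 1), ite_div]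

lemma sum_log_div_primesLE_add (N : ℕ) :
    ∑ p ∈ N.primesLE, log p / p + ∑ n ∈ Ioc 0 N, (if n.Prime then 0 else Λ n / n) =
      ∑ n ∈ Ioc 0 N, Λ n / n := by
  rw [Nat.primesLE_eq_filter_Ioc_zero, sum_filter, ← sum_add_distrib]
  refine sum_congr rfl fun n _ ↦ ?_
  split_ifs with hn
  · rw [vonMangoldt_apply_prime hn, add_zero]
  · rw [zero_add]

theorem mertens_first :
    ∃ C, ∀ N : ℕ, N ≠ 0 → |∑ p ∈ N.primesLE, log p / p - log N| ≤ C := by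
  set R := ∑' n : ℕ, if n.Prime then 0 else Λ n / n
  refine ⟨log 4 + 4 + R, fun N hN ↦ ?_⟩
  have term_nonneg (n : ℕ) : 0 ≤ if n.Prime then 0 else Λ n / n := by
    split_ifs
    exacts [le_rfl, div_nonneg vonMangoldt_nonneg n.cast_nonneg]
  have nonneg := sum_nonneg fun n (_ : n ∈ Ioc 0 N) ↦ term_nonneg n
  have le_tsum :=
    summable_vonMangoldt_div_of_not_prime.sum_le_tsum (Ioc 0 N) fun n _ ↦ term_nonneg n
  have bound := abs_le.1 (abs_sum_vonMangoldt_div_sub_log_le hN)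
  have split_sum := sum_log_div_primesLE_add N
  rw [abs_le]
  constructor <;> linarith

end MertensFirst

section MertensSecond

open Filter Finset Real Topology

lemma exists_tendsto_of_abs_sub_le_mul_sub {f g : ℕ → ℝ} {K l : ℝ} (hg : Tendsto g atTop (𝓝 l))
    (h : ∀ᶠ n in atTop, |f (n + 1) - f n| ≤ K * (g n - g (n + 1))) :
    ∃ b, Tendsto f atTop (𝓝 b) := by
  obtain ⟨N, hN⟩ := eventually_atTop.1 h
  set d : ℕ → ℝ := fun n ↦ K * (g (n + N) - g (n + 1 + N))
  have dist_le (n : ℕ) : dist (f (n + N)) (f (n + 1 + N)) ≤ d n := by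
    rw [dist_comm, dist_eq, Nat.add_right_comm]
    exact (hN (n + N) (Nat.le_add_left N n)).trans_eq (by simp only [d, Nat.add_right_comm n 1 N])
  have summable_d : Summable d := by
    refine ((hasSum_iff_tendsto_nat_of_nonneg (fun n ↦ dist_nonneg.trans (dist_le n))
      (K * (g (0 + N) - l))).2 ?_).summable
    simp only [d, ← mul_sum, sum_range_sub' fun n ↦ g (n + N)]
    exact (((tendsto_add_atTop_iff_nat N).2 hg).const_sub _).const_mul K
  obtain ⟨b, hb⟩ :=
    cauchySeq_tendsto_of_complete (cauchySeq_of_dist_le_of_summable d dist_le summable_d)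
  exact ⟨b, (tendsto_add_atTop_iff_nat N).1 hb⟩

lemma abs_sub_div_sub_log_sub_log_le {v u : ℝ} (hv : 0 < v) (hvu : v ≤ u) :
    |(u - v) / u - (log u - log v)| ≤ (u - v) * (v⁻¹ - u⁻¹) := by
  have hu : 0 < u := hv.trans_le hvu
  have upper := one_sub_inv_le_log_of_pos (div_pos hu hv)
  have lower := log_le_sub_one_of_pos (div_pos hu hv)
  rw [log_div hu.ne' hv.ne'] at upper lower
  have sub_div_u : (u - v) / u = 1 - (u / v)⁻¹ := by field_simp
  have sub_div_v : (u - v) * (v⁻¹ - u⁻¹) = (u / v - 1) - (1 - (u / v)⁻¹) := by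
    field_simp
  rw [sub_div_u, sub_div_v, abs_sub_comm, abs_of_nonneg (by linarith)]
  linarith

/-- Partial summation with frequencies `L`: the sequence that converges fast is the one corrected
by `D n / L n`, where `D n` is the error in the hypothesis. -/
lemma exists_tendsto_sum_sub_log {a L : ℕ → ℝ} {C K : ℝ} (hL : Monotone L)
    (hL_top : Tendsto L atTop atTop) (hK : ∀ n, L (n + 1) - L n ≤ K)
    (hC : ∀ᶠ n in atTop, |∑ k ∈ range (n + 1), a k * L k - L n| ≤ C) :
    ∃ b, Tendsto (fun n ↦ ∑ k ∈ range (n + 1), a k - log (L n)) atTop (𝓝 b) := by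
  set D : ℕ → ℝ := fun n ↦ ∑ k ∈ range (n + 1), a k * L k - L n with hD
  set T : ℕ → ℝ := fun n ↦ ∑ k ∈ range (n + 1), a k - log (L n) - D n / L n with hT
  have step : ∀ᶠ n in atTop, |T (n + 1) - T n| ≤ (C + K) * ((L n)⁻¹ - (L (n + 1))⁻¹) := by
    filter_upwards [hC, hL_top.eventually_gt_atTop 0] with n hCn hLn
    have hLn' : 0 < L (n + 1) := hLn.trans_le (hL n.le_succ)
    have inv_sub_nonneg : 0 ≤ (L n)⁻¹ - (L (n + 1))⁻¹ :=
      sub_nonneg.2 (inv_anti₀ hLn (hL n.le_succ))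
    have diff : T (n + 1) - T n = D n * ((L n)⁻¹ - (L (n + 1))⁻¹) +
        ((L (n + 1) - L n) / L (n + 1) - (log (L (n + 1)) - log (L n))) := by
      simp only [hT, hD, sum_range_succ _ (n + 1)]
      field_simp
      ring
    calc |T (n + 1) - T n|
        ≤ |D n| * ((L n)⁻¹ - (L (n + 1))⁻¹) +
          (L (n + 1) - L n) * ((L n)⁻¹ - (L (n + 1))⁻¹) := by
          rw [diff, ← abs_of_nonneg inv_sub_nonneg, ← abs_mul, abs_of_nonneg inv_sub_nonneg]
          exact (abs_add_le _ _).trans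
            (add_le_add_right (abs_sub_div_sub_log_sub_log_le hLn (hL n.le_succ)) _)
      _ ≤ C * ((L n)⁻¹ - (L (n + 1))⁻¹) + K * ((L n)⁻¹ - (L (n + 1))⁻¹) := by
          gcongr
          exact hK n
      _ = (C + K) * ((L n)⁻¹ - (L (n + 1))⁻¹) := by ring
  obtain ⟨b, hb⟩ := exists_tendsto_of_abs_sub_le_mul_sub hL_top.inv_tendsto_atTop step
  have bounded : IsBoundedUnder (· ≤ ·) atTop (norm ∘ D) := ⟨C, eventually_map.2 hC⟩
  have correction : Tendsto (fun n ↦ D n / L n) atTop (𝓝 0) := by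
    simpa only [div_eq_inv_mul] using!
      hL_top.inv_tendsto_atTop.zero_mul_isBoundedUnder_le bounded
  refine ⟨b, ?_⟩
  simpa [hT] using hb.add correction

lemma monotone_log_natCast : Monotone fun n : ℕ ↦ log n := fun m n hmn ↦ by
  rcases m.eq_zero_or_pos with rfl | hm
  · simpa using log_natCast_nonneg n
  · exact log_le_log (by positivity) (by exact_mod_cast hmn)

lemma log_natCast_succ_sub_log_le (n : ℕ) : log (n + 1 : ℕ) - log n ≤ log 2 := by
  rcases n.eq_zero_or_pos with rfl | hn
  · simpa using log_nonneg one_le_two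
  · have : (1 : ℝ) ≤ n := by exact_mod_cast hn
    rw [sub_le_iff_le_add, ← log_mul two_ne_zero (by positivity)]
    refine log_le_log (by positivity) ?_
    push_cast
    linarith

lemma sum_primesLE_eq_sum_range (f : ℕ → ℝ) (n : ℕ) :
    ∑ p ∈ n.primesLE, f p = ∑ k ∈ range (n + 1), if k.Prime then f k else 0 := by
  rw [Nat.primesLE_eq_filter_range, sum_filter]

theorem mertens_second :
    ∃ M, Tendsto (fun n : ℕ ↦ ∑ p ∈ n.primesLE, (p : ℝ)⁻¹ - log (log n)) atTop (𝓝 M) := by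
  obtain ⟨C, hC⟩ := mertens_first
  simp only [sum_primesLE_eq_sum_range fun k ↦ (k : ℝ)⁻¹]
  refine exists_tendsto_sum_sub_log monotone_log_natCast
    (tendsto_log_atTop.comp tendsto_natCast_atTop_atTop) log_natCast_succ_sub_log_le (C := C) ?_
  filter_upwards [eventually_ne_atTop 0] with n hn
  simp only [ite_mul, zero_mul, ← div_eq_inv_mul]
  rw [← sum_primesLE_eq_sum_range fun k ↦ log k / k]
  exact hC n hn

end MertensSecond

section EulerProduct

open Filter Finset Real Topology

lemma hasSum_log_of_hasProd {ι : Type*} {f : ι → ℝ} {x : ℝ} (hf : HasProd f x)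
    (hf₀ : ∀ i, f i ≠ 0) (hx : x ≠ 0) : HasSum (fun i ↦ log (f i)) (log x) := by
  simpa only [HasSum, log_prod fun i _ ↦ hf₀ i] using Tendsto.log hf hx

lemma prime_rpow_neg_lt_one {p : ℕ} (hp : p.Prime) {s : ℝ} (hs : 0 < s) : (p : ℝ) ^ (-s) < 1 :=
  rpow_lt_one_of_one_lt_of_neg (by exact_mod_cast hp.one_lt) (neg_lt_zero.2 hs)

lemma hasSum_neg_log_one_sub_rpow_neg {s : ℝ} (hs : 1 < s) :
    HasSum (fun p : Nat.Primes ↦ -log (1 - (p : ℝ) ^ (-s))) (log (∑' n : ℕ, 1 / (n : ℝ) ^ s)) := by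
  have hs₀ : 0 < s := by linarith
  let f : ℕ →*₀ ℝ :=
    { toFun := fun n ↦ (n : ℝ) ^ (-s)
      map_zero' := by simp [hs₀.ne']
      map_one' := by simp
      map_mul' := fun a b ↦ by simp [mul_rpow] }
  have hf (n : ℕ) : f n = (n : ℝ) ^ (-s) := rfl
  have summable_f : Summable f := summable_nat_rpow.2 (by linarith)
  have tsum_eq : ∑' n, f n = ∑' n : ℕ, 1 / (n : ℝ) ^ s :=
    tsum_congr fun n ↦ by rw [hf, rpow_neg n.cast_nonneg, one_div]
  have tsum_pos : 0 < ∑' n, f n :=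
    summable_f.tsum_pos (fun n ↦ by rw [hf]; positivity) 1 (by simp)
  have prod := EulerProduct.eulerProduct_completely_multiplicative_hasProd summable_f.norm
  have factor_ne_zero (p : Nat.Primes) : (1 - f p)⁻¹ ≠ 0 :=
    inv_ne_zero (sub_pos.2 (prime_rpow_neg_lt_one p.2 hs₀)).ne'
  rw [tsum_eq] at prod tsum_pos
  simpa only [log_inv, hf] using hasSum_log_of_hasProd prod factor_ne_zero tsum_pos.ne'

lemma tendsto_log_tsum_rpow_add_log :
    Tendsto (fun ε : ℝ ↦ log (∑' n : ℕ, 1 / (n : ℝ) ^ (1 + ε)) + log ε) (𝓝[>] 0) (𝓝 0) := by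
  have shift : Tendsto (fun ε : ℝ ↦ 1 + ε) (𝓝[>] 0) (𝓝[>] 1) := by
    have continuous_add : Continuous fun ε : ℝ ↦ 1 + ε := by fun_prop
    refine tendsto_nhdsWithin_iff.2 ⟨?_, ?_⟩
    · simpa using (continuous_add.tendsto 0).mono_left nhdsWithin_le_nhds
    · filter_upwards [self_mem_nhdsWithin] with ε hε
      exact lt_add_of_pos_right 1 (Set.mem_Ioi.1 hε)
  have mul_limit : Tendsto (fun ε : ℝ ↦ ε * ∑' n : ℕ, 1 / (n : ℝ) ^ (1 + ε)) (𝓝[>] 0) (𝓝 1) := by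
    simpa [Function.comp_def] using tendsto_sub_mul_tsum_nat_rpow.comp shift
  have log_limit := mul_limit.log one_ne_zero
  rw [log_one] at log_limit
  refine log_limit.congr' ?_
  filter_upwards [self_mem_nhdsWithin, mul_limit.eventually_ne one_ne_zero] with ε hε hne
  rw [log_mul (ne_of_gt hε) (right_ne_zero_of_mul hne), add_comm]

lemma tendsto_log_one_sub_exp_neg_sub_log :
    Tendsto (fun ε : ℝ ↦ log (1 - exp (-ε)) - log ε) (𝓝[>] 0) (𝓝 0) := by
  have deriv : HasDerivAt (fun ε : ℝ ↦ 1 - exp (-ε)) 1 0 := by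
    simpa using ((hasDerivAt_neg (0 : ℝ)).exp).const_sub 1
  have quotient : Tendsto (fun ε : ℝ ↦ (1 - exp (-ε)) / ε) (𝓝[>] 0) (𝓝 1) := by
    simpa [div_eq_inv_mul] using deriv.tendsto_slope_zero_right
  have log_limit := quotient.log one_ne_zero
  rw [log_one] at log_limit
  refine log_limit.congr' ?_
  filter_upwards [self_mem_nhdsWithin] with ε hε
  have : exp (-ε) < 1 := exp_lt_one_iff.2 (neg_lt_zero.2 hε)
  exact log_div (by linarith) (ne_of_gt hε)

/-- The tail `∑_{k ≥ 2} x ^ k / k` of the logarithm of the Euler factor `(1 - x)⁻¹`. -/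
noncomputable def logRemainder (x : ℝ) : ℝ := -log (1 - x) - x

lemma logRemainder_nonneg {x : ℝ} (hx : x < 1) : 0 ≤ logRemainder x := by
  have := log_le_sub_one_of_pos (sub_pos.2 hx)
  rw [logRemainder]
  linarith

lemma continuousAt_logRemainder {x : ℝ} (hx : x < 1) : ContinuousAt logRemainder x := by
  have : 1 - x ≠ 0 := (sub_pos.2 hx).ne'
  unfold logRemainder
  fun_prop (disch := assumption)

lemma logRemainder_le {x : ℝ} (hx : x ≤ 1 / 2) : logRemainder x ≤ 2 * x ^ 2 := by
  have hx' : 0 < 1 - x := by linarith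
  have log_ge := one_sub_inv_le_log_of_pos hx'
  calc logRemainder x ≤ (1 - x)⁻¹ - 1 - x := by
        rw [logRemainder]
        linarith
    _ = x ^ 2 / (1 - x) := by
        field_simp
        ring
    _ ≤ 2 * x ^ 2 := by
        rw [div_le_iff₀ hx']
        nlinarith [sq_nonneg x]

lemma norm_logRemainder_rpow_neg_le {p : ℕ} (hp : p.Prime) {s : ℝ} (hs : 1 ≤ s) :
    ‖logRemainder ((p : ℝ) ^ (-s))‖ ≤ 2 * (p : ℝ) ^ (-2 : ℝ) := by
  have hp₂ : (2 : ℝ) ≤ p := by exact_mod_cast hp.two_le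
  have rpow_le_inv : (p : ℝ) ^ (-s) ≤ (p : ℝ)⁻¹ := by
    rw [← rpow_neg_one]
    exact rpow_le_rpow_of_exponent_le (by linarith) (neg_le_neg hs)
  have inv_le_half : (p : ℝ)⁻¹ ≤ 1 / 2 := by
    rw [one_div]
    exact inv_anti₀ two_pos hp₂
  rw [norm_of_nonneg (logRemainder_nonneg (by linarith))]
  calc logRemainder ((p : ℝ) ^ (-s)) ≤ 2 * ((p : ℝ) ^ (-s)) ^ 2 :=
        logRemainder_le (rpow_le_inv.trans inv_le_half)
    _ ≤ 2 * ((p : ℝ)⁻¹) ^ 2 := by gcongr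
    _ = 2 * (p : ℝ) ^ (-2 : ℝ) := by rw [rpow_neg p.cast_nonneg, rpow_two, inv_pow]

lemma summable_two_mul_primes_rpow_neg_two :
    Summable fun p : Nat.Primes ↦ 2 * (p : ℝ) ^ (-2 : ℝ) :=
  (Nat.Primes.summable_rpow.2 (by norm_num)).mul_left 2

lemma summable_logRemainder_primes {s : ℝ} (hs : 1 ≤ s) :
    Summable fun p : Nat.Primes ↦ logRemainder ((p : ℝ) ^ (-s)) :=
  .of_norm_bounded summable_two_mul_primes_rpow_neg_two
    fun p ↦ norm_logRemainder_rpow_neg_le p.2 hs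

lemma tendsto_tsum_logRemainder :
    Tendsto (fun ε : ℝ ↦ ∑' p : Nat.Primes, logRemainder ((p : ℝ) ^ (-(1 + ε)))) (𝓝[>] 0)
      (𝓝 (∑' p : Nat.Primes, logRemainder (p : ℝ)⁻¹)) := by
  refine tendsto_tsum_of_dominated_convergence summable_two_mul_primes_rpow_neg_two
    (fun p ↦ ?_) ?_
  · have rpow_continuous : Continuous fun ε : ℝ ↦ (p : ℝ) ^ (-(1 + ε)) :=
      continuous_const.rpow (by fun_prop) fun _ ↦ Or.inl (by exact_mod_cast p.2.ne_zero)
    have remainder_continuousAt : ContinuousAt logRemainder ((p : ℝ) ^ (-(1 + 0 : ℝ))) :=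
      continuousAt_logRemainder (prime_rpow_neg_lt_one p.2 (by norm_num))
    simpa [rpow_neg_one, Function.comp_def] using
      (remainder_continuousAt.tendsto.comp (rpow_continuous.tendsto 0)).mono_left nhdsWithin_le_nhds
  · filter_upwards [self_mem_nhdsWithin] with ε hε p
    exact norm_logRemainder_rpow_neg_le p.2 (by linarith [Set.mem_Ioi.1 hε])

lemma tendsto_tsum_primes_rpow_add_log :
    Tendsto (fun ε : ℝ ↦ ∑' p : Nat.Primes, (p : ℝ) ^ (-(1 + ε)) + log (1 - exp (-ε))) (𝓝[>] 0)
      (𝓝 (-∑' p : Nat.Primes, logRemainder (p : ℝ)⁻¹)) := by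
  have limit := (tendsto_log_tsum_rpow_add_log.add tendsto_log_one_sub_exp_neg_sub_log).sub
    tendsto_tsum_logRemainder
  rw [add_zero, zero_sub] at limit
  refine limit.congr' ?_
  filter_upwards [self_mem_nhdsWithin] with ε hε
  have hs : 1 < 1 + ε := lt_add_of_pos_right 1 hε
  have summable_rpow : Summable fun p : Nat.Primes ↦ (p : ℝ) ^ (-(1 + ε)) :=
    Nat.Primes.summable_rpow.2 (neg_lt_neg hs)
  rw [← (hasSum_neg_log_one_sub_rpow_neg hs).tsum_eq]
  have split_tsum := summable_rpow.tsum_add (summable_logRemainder_primes hs.le)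
  simp only [logRemainder, add_sub_cancel] at split_tsum ⊢
  rw [split_tsum]
  ring

end EulerProduct

section MertensThird

open Asymptotics Filter Finset Real Topology

lemma tendsto_log_sub_log_of_isEquivalent {α : Type*} {l : Filter α} {f g : α → ℝ}
    (h : f ~[l] g) (hg : Tendsto g l atTop) :
    Tendsto (fun x ↦ log (f x) - log (g x)) l (𝓝 0) := by
  have hg₀ : ∀ᶠ x in l, g x ≠ 0 := hg.eventually_ne_atTop 0
  have quotient := (isEquivalent_iff_tendsto_one hg₀).1 h
  have log_limit := quotient.log one_ne_zero
  rw [log_one] at log_limit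
  refine log_limit.congr' ?_
  filter_upwards [hg₀, (h.symm.tendsto_atTop hg).eventually_ne_atTop 0] with x hgx hfx
  exact log_div hfx hgx

lemma tendsto_log_log_floor_exp_sub_log :
    Tendsto (fun t ↦ log (log ⌊exp t⌋₊) - log t) atTop (𝓝 0) := by
  have floor_equiv : (fun t : ℝ ↦ (⌊exp t⌋₊ : ℝ)) ~[atTop] exp :=
    isEquivalent_nat_floor.comp_tendsto tendsto_exp_atTop
  have log_equiv := floor_equiv.log tendsto_exp_atTop
  simp only [log_exp] at log_equiv
  exact tendsto_log_sub_log_of_isEquivalent log_equiv tendsto_id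

lemma tendsto_harmonic_floor_sub_log :
    Tendsto (fun t : ℝ ↦ (harmonic ⌊t⌋₊ : ℝ) - log t) atTop (𝓝 eulerMascheroniConstant) := by
  simpa using (tendsto_harmonic_sub_log.comp tendsto_nat_floor_atTop).add
    (tendsto_log_sub_log_of_isEquivalent isEquivalent_nat_floor tendsto_id)

/-- Coefficients of the general Dirichlet series
`∑ p, p⁻¹ * exp (-s log p) - ∑ n, (n + 1)⁻¹ * exp (-s (n + 1))`,
which compares the primes with the harmonic series. -/
noncomputable def mertensCoeff : Nat.Primes ⊕ ℕ → ℝ :=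
  Sum.elim (fun p ↦ (p : ℝ)⁻¹) fun n ↦ -((n : ℝ) + 1)⁻¹

/-- Frequencies of the general Dirichlet series with coefficients `mertensCoeff`. -/
noncomputable def mertensFreq : Nat.Primes ⊕ ℕ → ℝ :=
  Sum.elim (fun p ↦ log p) fun n ↦ n + 1

lemma mertensFreq_nonneg (i : Nat.Primes ⊕ ℕ) : 0 ≤ mertensFreq i := by
  rcases i with p | n
  · exact log_natCast_nonneg p
  · exact n.cast_add_one_pos.le

lemma dirichletPartialSum_mertens (t : ℝ) :
    dirichletPartialSum mertensCoeff mertensFreq t =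
      ∑ p ∈ Nat.primesLE ⌊exp t⌋₊, (p : ℝ)⁻¹ - harmonic ⌊t⌋₊ := by
  let primes : Finset Nat.Primes := (Nat.primesLE ⌊exp t⌋₊).subtype Nat.Prime
  have mem_iff (i : Nat.Primes ⊕ ℕ) : i ∈ primes.disjSum (range ⌊t⌋₊) ↔ mertensFreq i ≤ t := by
    rcases i with p | n
    · have hp : (0 : ℝ) < p := by exact_mod_cast p.2.pos
      calc Sum.inl p ∈ primes.disjSum (range ⌊t⌋₊) ↔ (p : ℕ) ∈ Nat.primesLE ⌊exp t⌋₊ :=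
            inl_mem_disjSum.trans mem_subtype
        _ ↔ (p : ℝ) ≤ exp t := by simp [Nat.mem_primesLE, Nat.le_floor_iff (exp_pos t).le, p.2]
        _ ↔ log p ≤ t := (log_le_iff_le_exp hp).symm
    · simp [mertensFreq, ← Nat.add_one_le_iff, Nat.le_floor_iff' n.succ_ne_zero]
  have sum_primes : ∑ p ∈ primes, (p : ℝ)⁻¹ = ∑ p ∈ Nat.primesLE ⌊exp t⌋₊, (p : ℝ)⁻¹ :=
    sum_subtype_of_mem (fun p : ℕ ↦ (p : ℝ)⁻¹) fun p ↦ Nat.prime_of_mem_primesLE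
  rw [dirichletPartialSum_eq_sum mem_iff, sum_disjSum]
  simp [mertensCoeff, sum_primes, harmonic, sub_eq_add_neg]

theorem tendsto_dirichletPartialSum_mertens {M : ℝ}
    (hM : Tendsto (fun n : ℕ ↦ ∑ p ∈ n.primesLE, (p : ℝ)⁻¹ - log (log n)) atTop (𝓝 M)) :
    Tendsto (dirichletPartialSum mertensCoeff mertensFreq) atTop
      (𝓝 (M - eulerMascheroniConstant)) := by
  have primes_limit := hM.comp (tendsto_nat_floor_atTop.comp tendsto_exp_atTop)
  have limit := (primes_limit.add tendsto_log_log_floor_exp_sub_log).sub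
    tendsto_harmonic_floor_sub_log
  rw [add_zero] at limit
  refine limit.congr fun t ↦ ?_
  rw [dirichletPartialSum_mertens, Function.comp_apply, Function.comp_apply]
  ring

lemma prime_inv_mul_exp_neg_mul_log {p : ℕ} (hp : p.Prime) (ε : ℝ) :
    (p : ℝ)⁻¹ * exp (-(ε * log p)) = (p : ℝ) ^ (-(1 + ε)) := by
  have hp₀ : (0 : ℝ) < p := by exact_mod_cast hp.pos
  rw [neg_add, rpow_add hp₀, rpow_neg_one, rpow_def_of_pos hp₀ (-ε)]
  ring_nf

lemma hasSum_mertens {ε : ℝ} (hε : 0 < ε) :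
    HasSum (fun i ↦ mertensCoeff i * exp (-(ε * mertensFreq i)))
      (∑' p : Nat.Primes, (p : ℝ) ^ (-(1 + ε)) + log (1 - exp (-ε))) := by
  have prime_term (p : Nat.Primes) : mertensCoeff (.inl p) * exp (-(ε * mertensFreq (.inl p))) =
      (p : ℝ) ^ (-(1 + ε)) :=
    prime_inv_mul_exp_neg_mul_log p.2 ε
  have nat_term (n : ℕ) : mertensCoeff (.inr n) * exp (-(ε * mertensFreq (.inr n))) =
      -(exp (-ε) ^ (n + 1) / (n + 1)) := by
    simp only [mertensCoeff, mertensFreq, Sum.elim_inr, ← exp_nat_mul]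
    push_cast
    ring_nf
  refine HasSum.sum ?_ ?_
  · simp only [Function.comp_def, prime_term]
    exact (Nat.Primes.summable_rpow.2 (by linarith)).hasSum
  · have abs_lt_one : |exp (-ε)| < 1 := by
      rw [abs_of_pos (exp_pos _)]
      exact exp_lt_one_iff.2 (neg_lt_zero.2 hε)
    simpa only [Function.comp_def, nat_term, neg_neg] using
      (hasSum_pow_div_log_of_abs_lt_one abs_lt_one).neg

theorem mertens_constant_eq {M : ℝ}
    (hM : Tendsto (fun n : ℕ ↦ ∑ p ∈ n.primesLE, (p : ℝ)⁻¹ - log (log n)) atTop (𝓝 M)) :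
    M = eulerMascheroniConstant - ∑' p : Nat.Primes, logRemainder (p : ℝ)⁻¹ := by
  have abel_limit := tendsto_tsum_mul_exp_neg_of_tendsto_dirichletPartialSum mertensFreq_nonneg
    (fun ε hε ↦ (hasSum_mertens hε).summable) (tendsto_dirichletPartialSum_mertens hM)
  have euler_limit : Tendsto (fun ε ↦ ∑' i, mertensCoeff i * exp (-(ε * mertensFreq i))) (𝓝[>] 0)
      (𝓝 (-∑' p : Nat.Primes, logRemainder (p : ℝ)⁻¹)) :=
    tendsto_tsum_primes_rpow_add_log.congr' <| by
      filter_upwards [self_mem_nhdsWithin] with ε hε using (hasSum_mertens hε).tsum_eq.symm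
  linarith [tendsto_nhds_unique abel_limit euler_limit]

lemma tendsto_sum_primesLE (f : ℕ → ℝ) {l : ℝ} (hf : HasSum (fun p : Nat.Primes ↦ f p) l) :
    Tendsto (fun n : ℕ ↦ ∑ p ∈ n.primesLE, f p) atTop (𝓝 l) := by
  have hasSum_indicator : HasSum (Set.indicator {p | p.Prime} f) l :=
    hasSum_subtype_iff_indicator.1 hf
  refine ((tendsto_add_atTop_iff_nat 1).2 hasSum_indicator.tendsto_sum_nat).congr fun n ↦ ?_
  simp [sum_primesLE_eq_sum_range, Set.indicator_apply]

lemma one_sub_inv_pos_of_mem_primesLE {n p : ℕ} (hp : p ∈ n.primesLE) : 0 < 1 - (p : ℝ)⁻¹ :=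
  sub_pos.2 (inv_lt_one_of_one_lt₀ (by exact_mod_cast (Nat.prime_of_mem_primesLE hp).one_lt))

lemma log_prod_one_sub_inv_primesLE (n : ℕ) :
    log (∏ p ∈ n.primesLE, (1 - (p : ℝ)⁻¹)) =
      -(∑ p ∈ n.primesLE, (p : ℝ)⁻¹ + ∑ p ∈ n.primesLE, logRemainder (p : ℝ)⁻¹) := by
  rw [log_prod fun p hp ↦ (one_sub_inv_pos_of_mem_primesLE hp).ne', ← sum_add_distrib,
    ← sum_neg_distrib]
  exact sum_congr rfl fun p _ ↦ by rw [logRemainder]; ring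

theorem mertens_third :
    Tendsto (fun n : ℕ ↦ log n * ∏ p ∈ n.primesLE, (1 - (p : ℝ)⁻¹)) atTop
      (𝓝 (exp (-eulerMascheroniConstant))) := by
  obtain ⟨M, hM⟩ := mertens_second
  have summable_remainder : Summable fun p : Nat.Primes ↦ logRemainder (p : ℝ)⁻¹ := by
    simpa only [rpow_neg_one] using summable_logRemainder_primes le_rfl
  have limit := hM.add
    (tendsto_sum_primesLE (fun p ↦ logRemainder (p : ℝ)⁻¹) summable_remainder.hasSum)
  rw [mertens_constant_eq hM, sub_add_cancel] at limit
  refine limit.neg.rexp.congr' ?_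
  filter_upwards [eventually_gt_atTop 1] with n hn
  have log_n_pos : 0 < log n := log_pos (by exact_mod_cast hn)
  have euler_product_pos : 0 < ∏ p ∈ n.primesLE, (1 - (p : ℝ)⁻¹) :=
    prod_pos fun p hp ↦ one_sub_inv_pos_of_mem_primesLE hp
  rw [← exp_log (mul_pos log_n_pos euler_product_pos), log_mul log_n_pos.ne' euler_product_pos.ne',
    log_prod_one_sub_inv_primesLE]
  ring_nf

end MertensThird

section LowerBound

open Filter Real

lemma exp_eulerMascheroniConstant_lt_two : exp eulerMascheroniConstant < 2 := by
  rw [← lt_log_iff_exp_lt two_pos]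
  linarith [eulerMascheroniConstant_lt_two_thirds, log_two_gt_d9]

lemma eventually_inv_lt_log_mul_prod_primesLE {c : ℝ} (hc : exp eulerMascheroniConstant < c) :
    ∀ᶠ m : ℕ in atTop, c⁻¹ < log m * ∏ p ∈ m.primesLE, (1 - (p : ℝ)⁻¹) := by
  refine mertens_third.eventually_const_lt ?_
  rw [exp_neg]
  exact inv_strictAnti₀ (exp_pos _) hc

theorem delta_zero_lower_bound_general {c : ℝ} (hc : exp eulerMascheroniConstant < c) :
    ∃ M : ℕ, ∀ m : ℕ, M ≤ m → ∀ n : ℕ, 1 ≤ n → n < m →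
      log n / (c * log m) < ((delta 0 n m : ℚ) : ℝ) := by
  obtain ⟨M, hM⟩ := eventually_atTop.1 (eventually_inv_lt_log_mul_prod_primesLE hc)
  refine ⟨M, fun m hm n hn hnm ↦ ?_⟩
  have log_m_pos : 0 < log m := log_pos (by exact_mod_cast hn.trans_lt hnm)
  have prod_gt : (c * log m)⁻¹ < ∏ p ∈ m.primesLE, (1 - (p : ℝ)⁻¹) := by
    rw [mul_inv, ← div_eq_mul_inv, div_lt_iff₀' log_m_pos]
    exact hM m hm
  have c_pos : 0 < c := (exp_pos _).trans hc
  have log_lt_harmonic : log n < harmonic n :=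
    (log_lt_log (by exact_mod_cast hn) (by push_cast; linarith)).trans_le
      (log_add_one_le_harmonic n)
  have delta_ge : (harmonic n : ℝ) * ∏ p ∈ m.primesLE, (1 - (p : ℝ)⁻¹) ≤ (delta 0 n m : ℚ) := by
    simpa using Rat.cast_le (K := ℝ).2 (harmonic_mul_prod_le_delta_zero hnm)
  calc log n / (c * log m) = log n * (c * log m)⁻¹ := div_eq_mul_inv _ _
    _ < harmonic n * ∏ p ∈ m.primesLE, (1 - (p : ℝ)⁻¹) :=
        mul_lt_mul'' log_lt_harmonic prod_gt (log_natCast_nonneg n) (by positivity)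
    _ ≤ ((delta 0 n m : ℚ) : ℝ) := delta_ge

end LowerBound

/-- There is `M` such that for all `m ≥ M` and all `n` with `2 ≤ n ≤ m-2`,
`δ_0(n,m) > (log n)/(2·log m)`. -/
theorem delta_zero_lower_bound :
    ∃ M : ℕ, ∀ m : ℕ, M ≤ m → ∀ n : ℕ, 2 ≤ n → n + 2 ≤ m →
      Real.log n / (2 * Real.log m) < ((delta 0 n m : ℚ) : ℝ) := by
  obtain ⟨M, hM⟩ := delta_zero_lower_bound_general exp_eulerMascheroniConstant_lt_two
  exact ⟨M, fun m hm n hn hnm ↦ hM m hm n (by omega) (by omega)⟩
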